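/- Let l_1, …, l_N : ℝ^d → ℝ be differentiable and β-smooth (β > 0), let η > 0, and let (θ_t, p_t) be the MR-GD iterates with gradient step size α = 1/β. Suppose (p*, θ*) minimizes Σ_{i=1}^N p_i l_i(θ) over the N-simplex and ℝ^d. Then for every ε > 0 and every integer T ≥ (2β/ε) ( (1/N) Σ_{i=1}^N l_i(θ_0) − Σ_{i=1}^N p*_i l_i(θ*) ), there exists t with 0 ≤ t ≤ T−1 such that ‖Σ_{i=1}^N p_{t,i} ∇l_i(θ_t)‖² ≤ ε. -/

import Mathlib

open Real Finset

/-- Descent lemma for a function with Lipschitz gradient. -/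
theorem aux_descent {d : ℕ} (f : EuclideanSpace ℝ (Fin d) → ℝ) (β : ℝ)
    (hf : Differentiable ℝ f)
    (hs : ∀ x y : EuclideanSpace ℝ (Fin d), ‖gradient f x - gradient f y‖ ≤ β * ‖x - y‖)
    (x v : EuclideanSpace ℝ (Fin d)) :
    f (x + v) ≤ f x + inner ℝ (gradient f x) v + β / 2 * ‖v‖ ^ 2 := by
  have hder : ∀ s : ℝ, HasDerivAt
      (fun s : ℝ => f (x + s • v) - s * inner ℝ (gradient f x) v - β / 2 * ‖v‖ ^ 2 * s ^ 2)
      (inner ℝ (gradient f (x + s • v)) v - inner ℝ (gradient f x) v - β * ‖v‖ ^ 2 * s) s := by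
    intro s
    have h1 : HasDerivAt (fun s : ℝ => x + s • v) v s := by
      simpa using ((hasDerivAt_id s).smul_const v).const_add x
    have h2 := (hf (x + s • v)).hasGradientAt.hasFDerivAt.comp_hasDerivAt s h1
    have h3 := (hasDerivAt_id s).mul_const (inner ℝ (gradient f x) v)
    have h4 := ((hasDerivAt_id s).pow 2).const_mul (β / 2 * ‖v‖ ^ 2)
    refine ((h2.sub h3).sub h4).congr_deriv ?_
    simp
    ring
  have hanti : AntitoneOn
      (fun s : ℝ => f (x + s • v) - s * inner ℝ (gradient f x) v - β / 2 * ‖v‖ ^ 2 * s ^ 2)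
      (Set.Ici 0) := by
    apply antitoneOn_of_deriv_nonpos (convex_Ici 0)
    · exact fun s _ => (hder s).continuousAt.continuousWithinAt
    · exact fun s _ => (hder s).differentiableAt.differentiableWithinAt
    · intro s hs'
      rw [interior_Ici] at hs'
      have hs0 : 0 < s := hs'
      rw [(hder s).deriv, ← inner_sub_left]
      have h1 := real_inner_le_norm (gradient f (x + s • v) - gradient f x) v
      have h2 := hs (x + s • v) x
      rw [add_sub_cancel_left, norm_smul, Real.norm_of_nonneg hs0.le] at h2
      have h3 := mul_le_mul_of_nonneg_right h2 (norm_nonneg v)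
      nlinarith
  have := hanti (Set.mem_Ici.2 le_rfl) (Set.mem_Ici.2 zero_le_one) zero_le_one
  simp only [one_smul, zero_smul, add_zero, one_mul, zero_mul, one_pow, mul_one, sub_zero, ne_eq,
    OfNat.ofNat_ne_zero, not_false_eq_true, zero_pow, mul_zero] at this
  linarith

/-- Exponential reweighting does not increase the weighted mean. -/
theorem aux_reweight {N : ℕ} (η : ℝ) (hη : 0 < η) (q a : Fin N → ℝ)
    (hq : ∀ i, 0 ≤ q i) (hq1 : ∑ i, q i = 1) :
    ∑ i, q i * Real.exp (-η * a i) * a i ≤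
      (∑ i, q i * Real.exp (-η * a i)) * ∑ i, q i * a i := by
  set m := ∑ i, q i * a i with hm
  have key : ∑ i, q i * ((a i - m) * Real.exp (-η * a i)) ≤
      ∑ i, q i * ((a i - m) * Real.exp (-η * m)) := by
    refine Finset.sum_le_sum fun i _ => mul_le_mul_of_nonneg_left ?_ (hq i)
    rcases le_total (a i) m with h | h
    · have : Real.exp (-η * m) ≤ Real.exp (-η * a i) := Real.exp_le_exp.2 (by nlinarith)
      nlinarith
    · have : Real.exp (-η * a i) ≤ Real.exp (-η * m) := Real.exp_le_exp.2 (by nlinarith)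
      nlinarith
  have h1 : ∑ i, q i * ((a i - m) * Real.exp (-η * m)) = 0 := by
    have : ∀ i, q i * ((a i - m) * Real.exp (-η * m)) =
        (q i * a i - q i * m) * Real.exp (-η * m) := fun i => by ring
    simp_rw [this]
    rw [← Finset.sum_mul, Finset.sum_sub_distrib, ← Finset.sum_mul, hq1, ← hm]
    ring
  have h2 : ∑ i, q i * ((a i - m) * Real.exp (-η * a i)) =
      ∑ i, q i * Real.exp (-η * a i) * a i - (∑ i, q i * Real.exp (-η * a i)) * m := by
    rw [Finset.sum_mul, ← Finset.sum_sub_distrib]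
    exact Finset.sum_congr rfl fun i _ => by ring
  linarith

/-- Corollary of the convergence theorem: after
T ≥ (2β/ε)((1/N)Σ l_i(θ_0) − Σ p*_i l_i(θ*)) iterations of MR-GD there is an
iterate 0 ≤ t ≤ T−1 whose weighted gradient has squared norm at most ε. -/
theorem mr_gd_convergence_corollary
    {N d : ℕ} (hN : 1 ≤ N) (hd : 1 ≤ d)
    (l : Fin N → EuclideanSpace ℝ (Fin d) → ℝ)
    (β η : ℝ) (hβ : 0 < β) (hη : 0 < η)
    (hdiff : ∀ i, Differentiable ℝ (l i))
    (hsmooth : ∀ i, ∀ x y : EuclideanSpace ℝ (Fin d),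
      ‖gradient (l i) x - gradient (l i) y‖ ≤ β * ‖x - y‖)
    (θ : ℕ → EuclideanSpace ℝ (Fin d)) (p : ℕ → Fin N → ℝ)
    (hp0 : ∀ i, p 0 i = 1 / N)
    (hθ : ∀ t, θ (t + 1) = θ t - (1 / β) • ∑ i, p t i • gradient (l i) (θ t))
    (hp : ∀ t i, p (t + 1) i =
      Real.exp (-η * ∑ s ∈ Finset.Icc 1 (t + 1), l i (θ s)) /
        ∑ j, Real.exp (-η * ∑ s ∈ Finset.Icc 1 (t + 1), l j (θ s)))
    (pstar : Fin N → ℝ) (θstar : EuclideanSpace ℝ (Fin d))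
    (hpstar_nonneg : ∀ i, 0 ≤ pstar i) (hpstar_sum : ∑ i, pstar i = 1)
    (hmin : ∀ (q : Fin N → ℝ) (ϑ : EuclideanSpace ℝ (Fin d)),
      (∀ i, 0 ≤ q i) → (∑ i, q i = 1) →
      ∑ i, pstar i * l i θstar ≤ ∑ i, q i * l i ϑ)
    (ε : ℝ) (hε : 0 < ε)
    (T : ℕ) (hT1 : 1 ≤ T)
    (hT : (2 * β / ε) * ((1 / N) * ∑ i, l i (θ 0) - ∑ i, pstar i * l i θstar) ≤ T) :
    ∃ t < T, ‖∑ i, p t i • gradient (l i) (θ t)‖ ^ 2 ≤ ε := by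
  have hNpos : (0 : ℝ) < N := by exact_mod_cast hN
  have : Nonempty (Fin N) := ⟨⟨0, hN⟩⟩
  have hw : ∀ t i, p t i = Real.exp (-η * ∑ s ∈ Finset.Icc 1 t, l i (θ s)) /
      ∑ j, Real.exp (-η * ∑ s ∈ Finset.Icc 1 t, l j (θ s)) := by
    intro t i
    cases t with
    | zero => simp [hp0]
    | succ t => exact hp t i
  have hZ : ∀ t, 0 < ∑ j, Real.exp (-η * ∑ s ∈ Finset.Icc 1 t, l j (θ s)) := fun t =>
    Finset.sum_pos (fun j _ => Real.exp_pos _) Finset.univ_nonempty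
  have hpn : ∀ t i, 0 < p t i := fun t i => by
    rw [hw]; exact div_pos (Real.exp_pos _) (hZ t)
  have hps : ∀ t, ∑ i, p t i = 1 := fun t => by
    simp_rw [hw t]
    rw [← Finset.sum_div, div_self (hZ t).ne']
  have hrec : ∀ t i, (∑ j, p t j * Real.exp (-η * l j (θ (t + 1)))) * p (t + 1) i =
      p t i * Real.exp (-η * l i (θ (t + 1))) := by
    intro t i
    have he : ∀ j, Real.exp (-η * ∑ s ∈ Finset.Icc 1 (t + 1), l j (θ s)) =
        Real.exp (-η * ∑ s ∈ Finset.Icc 1 t, l j (θ s)) * Real.exp (-η * l j (θ (t + 1))) := by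
      intro j
      rw [Finset.sum_Icc_succ_top (by omega), mul_add, Real.exp_add]
    have h1 := hZ t
    have h2 := hZ (t + 1)
    rw [hw (t + 1) i]
    simp_rw [hw t, div_mul_eq_mul_div, ← he]
    rw [← Finset.sum_div]
    field_simp
  have hrw : ∀ t, ∑ i, p (t + 1) i * l i (θ (t + 1)) ≤ ∑ i, p t i * l i (θ (t + 1)) := by
    intro t
    have h := aux_reweight η hη (p t) (fun i => l i (θ (t + 1))) (fun i => (hpn t i).le) (hps t)
    have hpos : 0 < ∑ j, p t j * Real.exp (-η * l j (θ (t + 1))) :=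
      Finset.sum_pos (fun j _ => mul_pos (hpn t j) (Real.exp_pos _)) Finset.univ_nonempty
    refine le_of_mul_le_mul_left (le_trans (le_of_eq ?_) h) hpos
    rw [Finset.mul_sum]
    exact Finset.sum_congr rfl fun i _ => by rw [← hrec t i]; ring
  have hdes : ∀ t, ∑ i, p t i * l i (θ (t + 1)) ≤ ∑ i, p t i * l i (θ t) -
      1 / (2 * β) * ‖∑ i, p t i • gradient (l i) (θ t)‖ ^ 2 := by
    intro t
    set g := ∑ i, p t i • gradient (l i) (θ t) with hg
    have hstep : θ (t + 1) = θ t + (-(1 / β)) • g := by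
      rw [hθ t, neg_smul, sub_eq_add_neg]
    have h1 : ∑ i, p t i * l i (θ (t + 1)) ≤ ∑ i, p t i * (l i (θ t) +
        inner ℝ (gradient (l i) (θ t)) ((-(1 / β)) • g) + β / 2 * ‖(-(1 / β)) • g‖ ^ 2) := by
      refine Finset.sum_le_sum fun i _ => mul_le_mul_of_nonneg_left ?_ (hpn t i).le
      rw [hstep]
      exact aux_descent (l i) β (hdiff i) (hsmooth i) _ _
    have h2 : ∑ i, p t i * inner ℝ (gradient (l i) (θ t)) ((-(1 / β)) • g) =
        -(1 / β) * ‖g‖ ^ 2 := by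
      rw [← real_inner_self_eq_norm_sq, ← real_inner_smul_right]
      conv_rhs => rw [hg, sum_inner]
      exact Finset.sum_congr rfl fun i _ => by rw [real_inner_smul_left]
    simp_rw [mul_add, Finset.sum_add_distrib] at h1
    rw [h2, ← Finset.sum_mul, hps t, norm_smul, mul_pow, Real.norm_eq_abs, sq_abs] at h1
    refine h1.trans (le_of_eq ?_)
    field_simp
    ring
  by_contra hcon
  push Not at hcon
  have htel : ∀ n ≤ T, ∑ i, p n i * l i (θ n) ≤
      ∑ i, p 0 i * l i (θ 0) - 1 / (2 * β) * ∑ t ∈ Finset.range n,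
        ‖∑ i, p t i • gradient (l i) (θ t)‖ ^ 2 := by
    intro n
    induction n with
    | zero => intro _; simp
    | succ n ih =>
      intro hn
      have h1 := ih (by omega)
      have h2 := hrw n
      have h3 := hdes n
      rw [Finset.sum_range_succ, mul_add]
      linarith
  have hT2 := htel T le_rfl
  have hlow := hmin (p T) (θ T) (fun i => (hpn T i).le) (hps T)
  have hsum : (T : ℝ) * ε < ∑ t ∈ Finset.range T,
      ‖∑ i, p t i • gradient (l i) (θ t)‖ ^ 2 := by
    have := Finset.sum_lt_sum_of_nonempty (s := Finset.range T) (f := fun _ => ε)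
      (Finset.nonempty_range_iff.2 (by omega)) (fun t ht => hcon t (Finset.mem_range.1 ht))
    simpa using this
  have h0 : ∑ i, p 0 i * l i (θ 0) = (1 / N) * ∑ i, l i (θ 0) := by
    rw [Finset.mul_sum]
    exact Finset.sum_congr rfl fun i _ => by rw [hp0]
  rw [h0] at hT2
  set S := ∑ t ∈ Finset.range T, ‖∑ i, p t i • gradient (l i) (θ t)‖ ^ 2
  set D := (1 / (N : ℝ)) * ∑ i, l i (θ 0) - ∑ i, pstar i * l i θstar with hD
  have h4 : 1 / (2 * β) * S ≤ D := by linarith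
  have h5 : S ≤ 2 * β * D := by
    rw [one_div, inv_mul_le_iff₀ (by positivity)] at h4
    exact h4
  have h6 : 2 * β * D ≤ T * ε := by
    rw [div_mul_eq_mul_div, div_le_iff₀ hε] at hT
    exact hT
  linarith
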